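/- Let A be a real symmetric 3 × 3 matrix (A : Matrix (Fin 3) (Fin 3) ℝ with Aᵀ = A) whose trace is zero. Then det A = (Real.sqrt 6 / 18) * (∑_{i,j} (A i j)^2)^(3/2) holds if and only if there exists a real number t ≥ 0 such that the characteristic polynomial of A equals (X − t) * (X + t/2)^2, i.e. the eigenvalues of A are t, −t/2, −t/2. -/

import Mathlib

open Matrix

open Polynomial

/-!
The coefficients of the characteristic polynomial of a `3 × 3` matrix `A` are given by `tr A`,
`tr A²` and `det A`, and `tr A²` is the squared Frobenius norm when `A` is symmetric. Comparing
coefficients, the eigenvalues are `t, -t/2, -t/2` exactly when `tr A = 0`, `tr A² = 3t²/2` and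
`det A = t³/4`. With `t = √(2 tr A² / 3)`, the only nonnegative solution of the second equation,
the third one says that `det A = (√6 / 18) (tr A²)^(3/2)`.
-/

lemma trace_mul_self_of_transpose_eq {n R : Type*} [Fintype n] [Semiring R] {A : Matrix n n R}
    (hA : Aᵀ = A) : (A * A).trace = ∑ i, ∑ j, A i j ^ 2 := by
  nth_rw 2 [← hA]
  simp only [← sum_hadamard_eq, hadamard_apply, sq]

section Charpoly

variable {K : Type*} [Field K] [NeZero (2 : K)]

lemma charpoly_fin_three (A : Matrix (Fin 3) (Fin 3) K) :
    A.charpoly =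
      Cubic.toPoly ⟨1, -A.trace, (A.trace ^ 2 - (A * A).trace) / 2, -A.det⟩ := by
  have second_coeff : (A.trace ^ 2 - (A * A).trace) / 2 =
      A 0 0 * A 1 1 - A 0 1 * A 1 0 + (A 0 0 * A 2 2 - A 0 2 * A 2 0) +
        (A 1 1 * A 2 2 - A 1 2 * A 2 1) := by
    rw [div_eq_iff two_ne_zero]
    simp only [trace_fin_three, mul_apply, Fin.sum_univ_three]
    ring
  rw [second_coeff, Cubic.toPoly, charpoly, det_fin_three, det_fin_three, trace_fin_three]
  simp only [charmatrix_apply, diagonal_apply, Fin.reduceEq, if_true, if_false, map_one, map_add,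
    map_sub, map_mul, map_neg]
  ring

lemma charpoly_eq_prod_X_sub_C_iff (A : Matrix (Fin 3) (Fin 3) K) (x y z : K) :
    A.charpoly = (X - C x) * (X - C y) * (X - C z) ↔
      A.trace = x + y + z ∧ (A * A).trace = x ^ 2 + y ^ 2 + z ^ 2 ∧ A.det = x * y * z := by
  have second_coeff_iff (htr : A.trace = x + y + z) :
      (A.trace ^ 2 - (A * A).trace) / 2 = x * y + x * z + y * z ↔
        (A * A).trace = x ^ 2 + y ^ 2 + z ^ 2 := by
    rw [htr, div_eq_iff two_ne_zero]
    constructor <;> intro h <;> linear_combination -h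
  simp only [charpoly_fin_three, Cubic.prod_X_sub_C_eq, Cubic.toPoly_injective, Cubic.mk.injEq,
    neg_inj, true_and]
  exact and_congr_right fun htr ↦ and_congr_left' (second_coeff_iff htr)

end Charpoly

lemma charpoly_eq_X_sub_C_mul_X_add_C_half_sq_iff (A : Matrix (Fin 3) (Fin 3) ℝ) (t : ℝ) :
    A.charpoly = (X - C t) * (X + C (t / 2)) ^ 2 ↔
      A.trace = 0 ∧ (A * A).trace = 3 / 2 * t ^ 2 ∧ A.det = t ^ 3 / 4 := by
  have factors : (X - C t) * (X + C (t / 2)) ^ 2 =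
      (X - C t) * (X - C (-(t / 2))) * (X - C (-(t / 2))) := by
    rw [C_neg]
    ring
  rw [factors, charpoly_eq_prod_X_sub_C_iff, show t + -(t / 2) + -(t / 2) = 0 by ring,
    show t ^ 2 + (-(t / 2)) ^ 2 + (-(t / 2)) ^ 2 = 3 / 2 * t ^ 2 by ring,
    show t * -(t / 2) * -(t / 2) = t ^ 3 / 4 by ring]

lemma sqrt_six_div_mul_rpow_three_halves {t : ℝ} (ht : 0 ≤ t) :
    √6 / 18 * (3 / 2 * t ^ 2) ^ ((3 : ℝ) / 2) = t ^ 3 / 4 := by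
  have sqrt_eq : √(3 / 2 * t ^ 2) = √6 / 2 * t := by
    rw [Real.sqrt_eq_iff_eq_sq (by positivity) (by positivity)]
    linear_combination -(t ^ 2 / 4) * Real.sq_sqrt (show (0 : ℝ) ≤ 6 by norm_num)
  calc √6 / 18 * (3 / 2 * t ^ 2) ^ ((3 : ℝ) / 2)
      = √6 / 18 * (√6 / 2 * t) ^ 3 := by
        rw [Real.rpow_div_two_eq_sqrt _ (by positivity), sqrt_eq, Real.rpow_ofNat]
    _ = (√6 ^ 2) ^ 2 / 144 * t ^ 3 := by ring
    _ = t ^ 3 / 4 := by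
        rw [Real.sq_sqrt (by norm_num)]
        ring

theorem det_bound_matrix_equality_general (A : Matrix (Fin 3) (Fin 3) ℝ)
    (htr : A.trace = 0) (hsq : 0 ≤ (A * A).trace) :
    A.det = √6 / 18 * (A * A).trace ^ ((3 : ℝ) / 2) ↔
      ∃ t : ℝ, 0 ≤ t ∧ A.charpoly = (X - C t) * (X + C (t / 2)) ^ 2 := by
  simp only [charpoly_eq_X_sub_C_mul_X_add_C_half_sq_iff, htr, true_and]
  constructor
  · intro hdet
    obtain ⟨t, ht, htrace⟩ : ∃ t : ℝ, 0 ≤ t ∧ (A * A).trace = 3 / 2 * t ^ 2 := by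
      refine ⟨√(2 / 3 * (A * A).trace), Real.sqrt_nonneg _, ?_⟩
      rw [Real.sq_sqrt (by positivity)]
      ring
    exact ⟨t, ht, htrace, by rw [hdet, htrace, sqrt_six_div_mul_rpow_three_halves ht]⟩
  · rintro ⟨t, ht, htrace, hdet⟩
    rw [hdet, htrace, sqrt_six_div_mul_rpow_three_halves ht]

/-- Equality case of inequality (2.9) in matrix form: equality holds iff the eigenvalues
of `A` are `t, -t/2, -t/2` for some `t ≥ 0`. -/
theorem det_bound_matrix_equality (A : Matrix (Fin 3) (Fin 3) ℝ)
    (hA : Aᵀ = A) (htr : A.trace = 0) :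
    A.det = (Real.sqrt 6 / 18) * (∑ i, ∑ j, (A i j) ^ 2) ^ ((3 : ℝ) / 2) ↔
      ∃ t : ℝ, 0 ≤ t ∧ A.charpoly = (X - C t) * (X + C (t / 2)) ^ 2 := by
  rw [← trace_mul_self_of_transpose_eq hA]
  exact det_bound_matrix_equality_general A htr (trace_mul_self_of_transpose_eq hA ▸ by positivity)
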